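/- arXiv:2501.15784 — 2 statements merged into one kernel-verified Lean document; each statement's English description precedes it below -/
import Mathlib

section
/- For every irrational real number θ = [a₀; a₁, a₂, …], the even Lagrange number satisfies L₀(θ) = limsup_{i→∞} ( α_{2i+1} + [0; a_{2i}, a_{2i−1}, …, a₁] ), where the equality holds in [0, ∞] (both sides may be +∞). -/
/-!
Write `dₙ = qₙ θ - pₙ`, `αₙ` for the complete quotients and `rₙ = [0; aₙ, …, a₁]`. The recurrences
give `rₙ₊₁ = qₙ / qₙ₊₁` and `dₙ₊₁ αₙ₊₂ = -dₙ`, and together they show that `dₙ qₙ (αₙ₊₁ + rₙ)`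
changes sign when `n` increases by one, so that it equals `(-1)ⁿ` (`cfErr_mul_cfQ_mul`). Hence
`|θ - pₙ/qₙ| = 1 / ((αₙ₊₁ + rₙ) qₙ²)`, and a positive `L` lies in `S₀(θ)` exactly when
`L < α_{2i+1} + r_{2i}` for infinitely many `i` (`mem_S0_iff`). The supremum of these `L` is the
limsup; the restriction to positive `L` is harmless because `α_{2i+1} > 1` puts `1` in `S₀(θ)`.
-/

open Filter Set MeasureTheory

/-- Complete quotients of `θ`: `α₀ = θ`, `α_{n+1} = 1/(αₙ - ⌊αₙ⌋)`. -/
noncomputable def cfAlpha (θ : ℝ) : ℕ → ℝ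
  | 0 => θ
  | n + 1 => (Int.fract (cfAlpha θ n))⁻¹

/-- Partial quotients `aₙ = ⌊αₙ⌋` of the continued fraction expansion of `θ`. -/
noncomputable def cfA (θ : ℝ) (n : ℕ) : ℤ := ⌊cfAlpha θ n⌋

/-- Numerators `pₙ` of the convergents of `θ`. -/
noncomputable def cfP (θ : ℝ) : ℕ → ℤ
  | 0 => cfA θ 0
  | 1 => cfA θ 1 * cfA θ 0 + 1
  | n + 2 => cfA θ (n + 2) * cfP θ (n + 1) + cfP θ n

/-- Denominators `qₙ` of the convergents of `θ`. -/
noncomputable def cfQ (θ : ℝ) : ℕ → ℤ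
  | 0 => 1
  | 1 => cfA θ 1
  | n + 2 => cfA θ (n + 2) * cfQ θ (n + 1) + cfQ θ n

/-- The `n`-th convergent `pₙ/qₙ` of `θ`. -/
noncomputable def cfConv (θ : ℝ) (n : ℕ) : ℝ := (cfP θ n : ℝ) / (cfQ θ n : ℝ)

/-- `S₀(θ)`: the set of `L > 0` such that `|θ - p_{2i}/q_{2i}| < 1/(L q_{2i}²)`
for infinitely many `i`. -/
def S0 (θ : ℝ) : Set ℝ :=
  {L : ℝ | 0 < L ∧
    {i : ℕ | |θ - cfConv θ (2 * i)| < 1 / (L * ((cfQ θ (2 * i) : ℝ)) ^ 2)}.Infinite}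

/-- `S₁(θ)`: the set of `L > 0` such that `|θ - p_{2i+1}/q_{2i+1}| < 1/(L q_{2i+1}²)`
for infinitely many `i`. -/
def S1 (θ : ℝ) : Set ℝ :=
  {L : ℝ | 0 < L ∧
    {i : ℕ | |θ - cfConv θ (2 * i + 1)| < 1 / (L * ((cfQ θ (2 * i + 1) : ℝ)) ^ 2)}.Infinite}

/-- The even Lagrange number `L₀(θ) = sup S₀(θ)`, as an extended real. -/
noncomputable def L0 (θ : ℝ) : EReal := sSup ((fun L : ℝ => (L : EReal)) '' S0 θ)

/-- The odd Lagrange number `L₁(θ) = sup S₁(θ)`, as an extended real. -/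
noncomputable def L1 (θ : ℝ) : EReal := sSup ((fun L : ℝ => (L : EReal)) '' S1 θ)

/-- `L₀(θ)` is attainable if the supremum defining it is a maximum. -/
def L0Attainable (θ : ℝ) : Prop := ∃ L ∈ S0 θ, (L : EReal) = L0 θ

/-- `L₁(θ)` is attainable if the supremum defining it is a maximum. -/
def L1Attainable (θ : ℝ) : Prop := ∃ L ∈ S1 θ, (L : EReal) = L1 θ

/-- The value of the reversed finite continued fraction `[0; aₙ, a_{n-1}, …, a₁]`. -/
noncomputable def cfRev (θ : ℝ) : ℕ → ℝ
  | 0 => 0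
  | n + 1 => ((cfA θ (n + 1) : ℝ) + cfRev θ n)⁻¹

theorem cfAlpha_irrational {θ : ℝ} (hθ : Irrational θ) (n : ℕ) : Irrational (cfAlpha θ n) := by
  induction n with
  | zero => exact hθ
  | succ n ih => exact (ih.sub_intCast ⌊cfAlpha θ n⌋).inv

theorem cfAlpha_fract_pos {θ : ℝ} (hθ : Irrational θ) (n : ℕ) : 0 < Int.fract (cfAlpha θ n) :=
  Int.fract_pos.2 ((cfAlpha_irrational hθ n).ne_int _)

theorem one_lt_cfAlpha_succ {θ : ℝ} (hθ : Irrational θ) (n : ℕ) : 1 < cfAlpha θ (n + 1) :=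
  (one_lt_inv₀ (cfAlpha_fract_pos hθ n)).2 (Int.fract_lt_one _)

/-- The relation `αₙ = aₙ + 1 / αₙ₊₁`, cleared of denominators. -/
theorem cfAlpha_sub_mul {θ : ℝ} (hθ : Irrational θ) (n : ℕ) :
    (cfAlpha θ n - cfA θ n) * cfAlpha θ (n + 1) = 1 :=
  mul_inv_cancel₀ (cfAlpha_fract_pos hθ n).ne'

theorem one_le_cfA_succ {θ : ℝ} (hθ : Irrational θ) (n : ℕ) : (1 : ℝ) ≤ cfA θ (n + 1) := by
  have h : (1 : ℤ) ≤ cfA θ (n + 1) :=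
    Int.le_floor.2 (by simpa using (one_lt_cfAlpha_succ hθ n).le)
  exact_mod_cast h

theorem cfRev_nonneg {θ : ℝ} (hθ : Irrational θ) (n : ℕ) : 0 ≤ cfRev θ n := by
  induction n with
  | zero => exact le_rfl
  | succ n ih => exact inv_nonneg.2 (add_nonneg (by linarith [one_le_cfA_succ hθ n]) ih)

theorem cfRev_succ_mul {θ : ℝ} (hθ : Irrational θ) (n : ℕ) :
    cfRev θ (n + 1) * (cfA θ (n + 1) + cfRev θ n) = 1 :=
  inv_mul_cancel₀ (by linarith [one_le_cfA_succ hθ n, cfRev_nonneg hθ n])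

/-- Equivalent to `qₙ = rₙ₊₁ qₙ₊₁`: the reversed continued fraction is the ratio of consecutive
denominators. -/
theorem cfQ_succ {θ : ℝ} (hθ : Irrational θ) (n : ℕ) :
    (cfQ θ (n + 1) : ℝ) = cfQ θ n * (cfA θ (n + 1) + cfRev θ n) := by
  induction n with
  | zero => simp [cfQ, cfRev]
  | succ n ih =>
    have h := cfRev_succ_mul hθ n
    have e : (cfQ θ (n + 1 + 1) : ℝ) = cfA θ (n + 1 + 1) * cfQ θ (n + 1) + cfQ θ n := by
      simp [cfQ]
    rw [e]
    linear_combination (-cfRev θ (n + 1)) * ih - (cfQ θ n : ℝ) * h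

theorem cfQ_pos {θ : ℝ} (hθ : Irrational θ) (n : ℕ) : (0 : ℝ) < cfQ θ n := by
  induction n with
  | zero => simp [cfQ]
  | succ n ih =>
    rw [cfQ_succ hθ n]
    exact mul_pos ih (by linarith [one_le_cfA_succ hθ n, cfRev_nonneg hθ n])

/-- The signed approximation error `dₙ = qₙ θ - pₙ` of the `n`-th convergent, scaled by its
denominator. -/
noncomputable def cfErr (θ : ℝ) (n : ℕ) : ℝ := cfQ θ n * θ - cfP θ n

/-- The errors satisfy the same recurrence as the convergents, and `aₙ₊₂ - αₙ₊₂ = -1 / αₙ₊₃`. -/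
theorem cfErr_succ_mul {θ : ℝ} (hθ : Irrational θ) (n : ℕ) :
    cfErr θ (n + 1) * cfAlpha θ (n + 2) = -cfErr θ n := by
  induction n with
  | zero =>
    have h0 := cfAlpha_sub_mul hθ 0
    have h1 := cfAlpha_sub_mul hθ 1
    simp only [cfErr, cfQ, cfP, cfAlpha.eq_1, zero_add] at *
    push_cast
    linear_combination (cfA θ 0 - θ) * h1 + cfAlpha θ 2 * h0
  | succ n ih =>
    have h := cfAlpha_sub_mul hθ (n + 2)
    have e : cfErr θ (n + 1 + 1) = cfA θ (n + 2) * cfErr θ (n + 1) + cfErr θ n := by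
      simp only [cfErr, cfQ, cfP]
      push_cast
      ring
    rw [e]
    linear_combination (-cfErr θ (n + 1)) * h + cfAlpha θ (n + 3) * ih

/-- The sign alternates because `dₙ = -dₙ₊₁ αₙ₊₂`, `αₙ₊₁ = aₙ₊₁ + 1 / αₙ₊₂` and
`qₙ₊₁ = qₙ (aₙ₊₁ + rₙ)` turn the expression at `n` into minus the one at `n + 1`. -/
theorem cfErr_mul_cfQ_mul {θ : ℝ} (hθ : Irrational θ) (n : ℕ) :
    cfErr θ n * cfQ θ n * (cfAlpha θ (n + 1) + cfRev θ n) = (-1) ^ n := by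
  induction n with
  | zero =>
    have h := cfAlpha_sub_mul hθ 0
    simp only [cfErr, cfQ, cfP, cfRev, cfAlpha.eq_1] at *
    push_cast
    linear_combination h
  | succ n ih =>
    have hd := cfErr_succ_mul hθ n
    have hα := cfAlpha_sub_mul hθ (n + 1)
    have hq := cfQ_succ hθ n
    have hr := cfRev_succ_mul hθ n
    have key : cfErr θ (n + 1) * cfQ θ (n + 1) * (cfAlpha θ (n + 1 + 1) + cfRev θ (n + 1)) =
        -(cfErr θ n * cfQ θ n * (cfAlpha θ (n + 1) + cfRev θ n)) := by
      linear_combination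
        cfErr θ (n + 1) * (cfAlpha θ (n + 2) + cfRev θ (n + 1)) * hq
        + cfErr θ (n + 1) * cfQ θ n * hr
        + cfQ θ n * (cfAlpha θ (n + 1) + cfRev θ n) * hd
        - cfErr θ (n + 1) * cfQ θ n * hα
    rw [key, ih, pow_succ]
    ring

theorem abs_sub_cfConv {θ : ℝ} (hθ : Irrational θ) (n : ℕ) :
    |θ - cfConv θ n| = 1 / ((cfAlpha θ (n + 1) + cfRev θ n) * (cfQ θ n : ℝ) ^ 2) := by
  have hq := cfQ_pos hθ n
  have hx : 0 < cfAlpha θ (n + 1) + cfRev θ n := by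
    linarith [one_lt_cfAlpha_succ hθ n, cfRev_nonneg hθ n]
  have e : θ - cfConv θ n =
      (-1) ^ n / ((cfAlpha θ (n + 1) + cfRev θ n) * (cfQ θ n : ℝ) ^ 2) := by
    rw [← cfErr_mul_cfQ_mul hθ n, cfErr, cfConv]
    field_simp
  rw [e, abs_div, abs_pow, abs_neg, abs_one, one_pow, abs_of_pos (by positivity)]

theorem mem_S0_iff {θ : ℝ} (hθ : Irrational θ) (L : ℝ) :
    L ∈ S0 θ ↔ 0 < L ∧ ∃ᶠ i : ℕ in atTop, L < cfAlpha θ (2 * i + 1) + cfRev θ (2 * i) := by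
  rw [Nat.frequently_atTop_iff_infinite]
  refine and_congr_right fun hL => ?_
  have (i : ℕ) : |θ - cfConv θ (2 * i)| < 1 / (L * (cfQ θ (2 * i) : ℝ) ^ 2) ↔
      L < cfAlpha θ (2 * i + 1) + cfRev θ (2 * i) := by
    have hq := pow_pos (cfQ_pos hθ (2 * i)) 2
    have hx : 0 < cfAlpha θ (2 * i + 1) + cfRev θ (2 * i) := by
      linarith [one_lt_cfAlpha_succ hθ (2 * i), cfRev_nonneg hθ (2 * i)]
    rw [abs_sub_cfConv hθ, one_div_lt_one_div (mul_pos hx hq) (mul_pos hL hq),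
      mul_lt_mul_iff_left₀ hq]
  simp only [this]

/-- `L₀(θ) = limsup_{i→∞} (α_{2i+1} + [0; a_{2i}, …, a₁])`, with equality in `[0,∞]`. -/
theorem even_lagrange_limsup (θ : ℝ) (hθ : Irrational θ) :
    L0 θ =
      Filter.limsup
        (fun i : ℕ => ((cfAlpha θ (2 * i + 1) + cfRev θ (2 * i) : ℝ) : EReal))
        Filter.atTop := by
  refine le_antisymm (sSup_le ?_) (le_of_forall_lt_imp_le_of_dense fun b hb => ?_)
  · rintro _ ⟨L, hL, rfl⟩
    refine le_limsup_of_frequently_le (((mem_S0_iff hθ L).1 hL).2.mono fun i hi => ?_)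
    exact EReal.coe_le_coe_iff.2 hi.le
  · obtain ⟨c, hbc, hc⟩ := EReal.lt_iff_exists_real_btwn.1 hb
    have one_mem : (1 : ℝ) ∈ S0 θ := by
      refine (mem_S0_iff hθ 1).2 ⟨one_pos, Eventually.frequently (.of_forall fun i => ?_)⟩
      linarith [one_lt_cfAlpha_succ hθ (2 * i), cfRev_nonneg hθ (2 * i)]
    rcases le_or_gt c 0 with h | h
    · -- A nonpositive `c` is not in `S₀(θ)`, but then `1` is a large enough element.
      refine hbc.le.trans (le_trans ?_ (le_sSup (mem_image_of_mem _ one_mem)))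
      exact EReal.coe_le_coe_iff.2 (h.trans zero_le_one)
    · refine hbc.le.trans (le_sSup (mem_image_of_mem _ ((mem_S0_iff hθ c).2 ⟨h, ?_⟩)))
      exact (frequently_lt_of_lt_limsup (by isBoundedDefault) hc).mono fun i hi =>
        EReal.coe_lt_coe_iff.1 hi
end

section
/- For every real constant C, the set {θ ∈ ℝ : θ is irrational and L₁(θ) > C} has full Lebesgue measure in ℝ, i.e. its complement is Lebesgue-null. -/
/-!
Fix `M ≥ 1`. If `α_{2i+2}(θ) > M`, then `|θ - p_{2i+1}/q_{2i+1}| < 1/(M q_{2i+1}²)`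
(`abs_sub_conv_lt`), so it suffices that for almost every `θ` the complete quotients of even index
exceed `M` infinitely often. This follows from Lebesgue's density theorem, with no appeal to
ergodicity of the Gauss map.

Let `E = avoidSet M N` be the set of irrational `θ` with `α_{2i+2}(θ) ≤ M` for all `i ≥ N`.
For irrational `θ` and odd `n`, write `p/q` and `p'/q'` for the convergents of index `n` and
`n - 1`. Every `y` strictly between `(pM + p')/(qM + q')` and `p/q` has the form
`(pt + p')/(qt + q')` with `t > M`, and then `α_{n+1}(y) = t` (`exists_cfAlpha_eq`). Hence this
interval is disjoint from `E`; its length is at least `1/((M + 1)q²)`, and it lies in the closed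
ball of radius `1/q²` around `p/q`, which also contains `θ`. So in these balls, which shrink to
`θ`, the density of `E` stays bounded away from `1`. Thus no point of `E` is a density point of
`E`, and `E` is null (`volume_avoidSet`).
-/

open Filter Set MeasureTheory

lemma irrational_cfAlpha {θ : ℝ} (h : Irrational θ) (n : ℕ) : Irrational (cfAlpha θ n) := by
  induction n with
  | zero => exact h
  | succ n ih =>
    have : Irrational (Int.fract (cfAlpha θ n)) := by
      rw [Int.fract]; exact ih.sub_intCast _
    exact irrational_inv_iff.mpr this

lemma one_lt_cfAlpha {θ : ℝ} (h : Irrational θ) (n : ℕ) : 1 < cfAlpha θ (n + 1) := by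
  have h1 : 0 < Int.fract (cfAlpha θ n) := by
    rw [Int.fract_pos]
    exact (irrational_cfAlpha h n).ne_int _
  exact (one_lt_inv₀ h1).mpr (Int.fract_lt_one _)

lemma one_le_cfA {θ : ℝ} (h : Irrational θ) (n : ℕ) : 1 ≤ cfA θ (n + 1) := by
  rw [cfA, Int.le_floor]
  exact_mod_cast (one_lt_cfAlpha h n).le

lemma cfAlpha_eq (θ : ℝ) (n : ℕ) :
    cfAlpha θ n = cfA θ n + 1 / cfAlpha θ (n + 1) := by
  rw [cfAlpha, cfA, one_div, inv_inv, Int.floor_add_fract]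

/-- The denominators grow at least linearly, hence tend to infinity. -/
lemma succ_le_cfQ {θ : ℝ} (h : Irrational θ) (n : ℕ) :
    1 ≤ cfQ θ n ∧ (n : ℤ) + 1 ≤ cfQ θ (n + 1) := by
  induction n with
  | zero => exact ⟨le_rfl, by simpa [cfQ] using one_le_cfA h 0⟩
  | succ n ih =>
    refine ⟨by omega, ?_⟩
    have ha := one_le_cfA h (n + 1)
    have hq : (1 : ℤ) ≤ cfQ θ (n + 1) := by omega
    rw [cfQ]
    push_cast
    nlinarith

lemma cfQ_le_succ {θ : ℝ} (h : Irrational θ) (n : ℕ) : cfQ θ n ≤ cfQ θ (n + 1) := by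
  cases n with
  | zero => simpa [cfQ] using one_le_cfA h 0
  | succ n =>
    have ha := one_le_cfA h (n + 1)
    have h1 := (succ_le_cfQ h n).1
    have h2 := (succ_le_cfQ h (n + 1)).1
    rw [cfQ.eq_3]
    nlinarith

lemma cf_det (θ : ℝ) (n : ℕ) :
    cfP θ (n + 1) * cfQ θ n - cfP θ n * cfQ θ (n + 1) = (-1) ^ n := by
  induction n with
  | zero => simp [cfP, cfQ]; ring
  | succ n ih =>
    rw [cfP.eq_3, cfQ.eq_3, pow_succ, ← ih]; ring

/-- `θ = (p_{n+1} α_{n+2} + p_n) / (q_{n+1} α_{n+2} + q_n)`, with denominators cleared. -/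
lemma cf_identity {θ : ℝ} (h : Irrational θ) (n : ℕ) :
    θ * (cfQ θ (n + 1) * cfAlpha θ (n + 2) + cfQ θ n)
      = cfP θ (n + 1) * cfAlpha θ (n + 2) + cfP θ n := by
  have hpos : ∀ k, cfAlpha θ (k + 1) ≠ 0 := fun k => by linarith [one_lt_cfAlpha h k]
  induction n with
  | zero =>
    have e0 : θ = cfA θ 0 + 1 / cfAlpha θ 1 := cfAlpha_eq θ 0
    have e1 := cfAlpha_eq θ 1
    have h1 := hpos 0
    have h2 := hpos 1
    simp only [zero_add, Nat.reduceAdd] at h1 h2 e1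
    simp only [cfP, cfQ, zero_add]
    push_cast
    have h3 : cfAlpha θ 1 * cfAlpha θ 2 = cfA θ 1 * cfAlpha θ 2 + 1 := by
      rw [e1]; field_simp
    have h4 : θ * cfAlpha θ 1 = cfA θ 0 * cfAlpha θ 1 + 1 := by
      rw [show θ * cfAlpha θ 1 = (cfA θ 0 + 1 / cfAlpha θ 1) * cfAlpha θ 1 from
        congrArg (· * cfAlpha θ 1) e0]
      field_simp
    rw [← h3]
    linear_combination cfAlpha θ 2 * h4 + (cfA θ 0 : ℝ) * h3
  | succ n ih =>
    have h3 : cfAlpha θ (n + 2) * cfAlpha θ (n + 3) = cfA θ (n + 2) * cfAlpha θ (n + 3) + 1 := by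
      have := hpos (n + 2)
      rw [cfAlpha_eq θ (n + 2)]; field_simp
    rw [cfP.eq_3, cfQ.eq_3]
    push_cast
    linear_combination cfAlpha θ (n + 3) * ih
      + ((cfP θ (n + 1) : ℝ) - θ * cfQ θ (n + 1)) * h3

lemma cfAlpha_succ_of_eq {x t : ℝ} {a : ℤ} {n : ℕ} (ht : 1 < t) (h : cfAlpha x n = a + 1 / t) :
    cfAlpha x (n + 1) = t := by
  have h0 : 0 ≤ 1 / t := by positivity
  have h1 : 1 / t < 1 := by rw [div_lt_one (by linarith)]; exact ht
  rw [cfAlpha, h, Int.fract_intCast_add, Int.fract_eq_self.mpr ⟨h0, h1⟩, one_div, inv_inv]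

/-- Every `t > 1` occurs as a complete quotient after the initial partial quotients of `θ`:
the point `x = (p_{n+1} t + p_n) / (q_{n+1} t + q_n)` has `α_{n+2}(x) = t`. -/
lemma exists_cfAlpha_eq {θ : ℝ} (h : Irrational θ) (n : ℕ) : ∀ t : ℝ, 1 < t →
    ∃ x : ℝ, cfAlpha x (n + 2) = t ∧
      x * (cfQ θ (n + 1) * t + cfQ θ n) = cfP θ (n + 1) * t + cfP θ n := by
  have key : ∀ k : ℕ, ∀ t : ℝ, 1 < t → 1 < (cfA θ (k + 1) : ℝ) + 1 / t := fun k t ht => by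
    have h1 : (1 : ℝ) ≤ cfA θ (k + 1) := by exact_mod_cast one_le_cfA h k
    have h2 : 0 < 1 / t := by positivity
    linarith
  induction n with
  | zero =>
    intro t ht
    have hs := key 0 t ht
    set s : ℝ := (cfA θ (0 + 1) : ℝ) + 1 / t with hsdef
    refine ⟨cfA θ 0 + 1 / s, ?_, ?_⟩
    · exact cfAlpha_succ_of_eq ht (cfAlpha_succ_of_eq hs rfl)
    · have hst : (cfA θ 1 : ℝ) * t + 1 = s * t := by
        rw [hsdef]; field_simp
      have hs0 : s ≠ 0 := by linarith
      simp only [cfP, cfQ]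
      push_cast
      rw [hst]
      field_simp
      linear_combination -(cfA θ 0 : ℝ) * hst
  | succ n ih =>
    intro t ht
    obtain ⟨x, hx, hid⟩ := ih _ (key (n + 1) t ht)
    refine ⟨x, cfAlpha_succ_of_eq ht hx, ?_⟩
    have ht0 : t ≠ 0 := by linarith
    rw [cfP.eq_3, cfQ.eq_3]
    push_cast
    field_simp at hid
    linear_combination hid

/-- The exact gap between `θ` and a convergent of odd index; it is positive. -/
lemma conv_sub {θ : ℝ} (h : Irrational θ) (i : ℕ) :
    cfConv θ (2 * i + 1) - θ = 1 / (cfQ θ (2 * i + 1) *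
      (cfQ θ (2 * i + 1) * cfAlpha θ (2 * i + 2) + cfQ θ (2 * i))) := by
  have hid := cf_identity h (2 * i)
  have hdet : (cfP θ (2 * i + 1) : ℝ) * cfQ θ (2 * i) - cfP θ (2 * i) * cfQ θ (2 * i + 1) = 1 := by
    have := cf_det θ (2 * i)
    rw [pow_mul, neg_one_sq, one_pow] at this
    exact_mod_cast this
  have hQ' : (1 : ℝ) ≤ cfQ θ (2 * i) := by exact_mod_cast (succ_le_cfQ h (2 * i)).1
  have hQ : (1 : ℝ) ≤ cfQ θ (2 * i + 1) := by exact_mod_cast (succ_le_cfQ h (2 * i + 1)).1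
  have ha := one_lt_cfAlpha h (2 * i + 1)
  have hD : 0 < (cfQ θ (2 * i + 1) : ℝ) * cfAlpha θ (2 * i + 2) + cfQ θ (2 * i) := by
    have : 0 < cfAlpha θ (2 * i + 2) := by linarith
    positivity
  rw [cfConv, div_sub' (by positivity), div_eq_div_iff (by positivity) (by positivity)]
  linear_combination -(cfQ θ (2 * i + 1) : ℝ) ^ 2 * hid + (cfQ θ (2 * i + 1) : ℝ) * hdet

lemma abs_sub_conv_lt {θ M : ℝ} (h : Irrational θ) (hM : 0 < M) (i : ℕ)
    (hi : M < cfAlpha θ (2 * i + 2)) :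
    |θ - cfConv θ (2 * i + 1)| < 1 / (M * (cfQ θ (2 * i + 1) : ℝ) ^ 2) := by
  have hQ' : (1 : ℝ) ≤ cfQ θ (2 * i) := by exact_mod_cast (succ_le_cfQ h (2 * i)).1
  have hQ : (1 : ℝ) ≤ cfQ θ (2 * i + 1) := by exact_mod_cast (succ_le_cfQ h (2 * i + 1)).1
  have ha : 0 < cfAlpha θ (2 * i + 2) := by linarith
  rw [abs_sub_comm, conv_sub h i, abs_of_nonneg (by positivity)]
  apply one_div_lt_one_div_of_lt (by positivity)
  have : M * (cfQ θ (2 * i + 1) : ℝ) ^ 2 < cfAlpha θ (2 * i + 2) * (cfQ θ (2 * i + 1) : ℝ) ^ 2 := by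
    gcongr
  nlinarith

/-- The irrational `θ` whose complete quotients `α_{2i+2}` are at most `M` for all `i ≥ N`. -/
def avoidSet (M : ℝ) (N : ℕ) : Set ℝ :=
  {θ | Irrational θ ∧ ∀ i ≥ N, cfAlpha θ (2 * i + 2) ≤ M}

/-- The points just below an odd convergent of `θ` have a large complete quotient, so they
do not belong to `avoidSet M N`. -/
lemma disjoint_avoidSet {θ M : ℝ} (h : Irrational θ) (hM : 1 ≤ M) {N i : ℕ} (hi : N ≤ i) :
    Disjoint (avoidSet M N)
      (Ioo (cfConv θ (2 * i + 1) - 1 / (cfQ θ (2 * i + 1) *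
        (cfQ θ (2 * i + 1) * M + cfQ θ (2 * i)))) (cfConv θ (2 * i + 1))) := by
  rw [Set.disjoint_right]
  rintro y ⟨hy1, hy2⟩ ⟨-, hy⟩
  have hdet : (cfP θ (2 * i + 1) : ℝ) * cfQ θ (2 * i) - cfP θ (2 * i) * cfQ θ (2 * i + 1) = 1 := by
    have := cf_det θ (2 * i)
    rw [pow_mul, neg_one_sq, one_pow] at this
    exact_mod_cast this
  have hQ' : (1 : ℝ) ≤ cfQ θ (2 * i) := by exact_mod_cast (succ_le_cfQ h (2 * i)).1
  have hQ : (1 : ℝ) ≤ cfQ θ (2 * i + 1) := by exact_mod_cast (succ_le_cfQ h (2 * i + 1)).1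
  have hex := exists_cfAlpha_eq h (2 * i)
  have hyi := hy i hi
  rw [cfConv] at hy1 hy2
  set P : ℝ := (cfP θ (2 * i + 1) : ℝ)
  set P' : ℝ := (cfP θ (2 * i) : ℝ)
  set Q : ℝ := (cfQ θ (2 * i + 1) : ℝ)
  set Q' : ℝ := (cfQ θ (2 * i) : ℝ)
  have hQ0 : 0 < Q := by linarith
  have hD : 0 < Q * M + Q' := by positivity
  have hpos : 0 < P - Q * y := by
    rw [lt_div_iff₀ hQ0] at hy2; linarith
  have hlow : P * M + P' < y * (Q * M + Q') := by
    have e : P / Q - 1 / (Q * (Q * M + Q')) = (P * M + P') / (Q * M + Q') := by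
      field_simp
      linear_combination hdet
    rwa [e, div_lt_iff₀ hD] at hy1
  -- The parameter `t` solves `y = (P t + P') / (Q t + Q')`.
  set t : ℝ := (Q' * y - P') / (P - Q * y) with ht
  have htM : M < t := by
    rw [ht, lt_div_iff₀ hpos]; linarith
  have hteq : t * (P - Q * y) = Q' * y - P' := div_mul_cancel₀ _ hpos.ne'
  obtain ⟨x, hx, hid⟩ := hex t (by linarith)
  have hDt : 0 < Q * t + Q' := by
    have : 0 < t := by linarith
    positivity
  have hxy : x = y := by
    apply mul_right_cancel₀ hDt.ne'
    rw [hid]; linear_combination hteq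
  rw [← hxy, hx] at hyi
  linarith

lemma volume_avoidSet {M : ℝ} (hM : 1 ≤ M) (N : ℕ) : volume (avoidSet M N) = 0 := by
  have hdens := IsUnifLocDoublingMeasure.ae_tendsto_measure_inter_div
    (volume : Measure ℝ) (avoidSet M N) 1
  rw [ae_iff] at hdens
  rw [← Measure.restrict_apply_self]
  refine measure_mono_null (fun θ hθ => ?_) hdens
  have h := hθ.1
  intro hlim
  have hQ : ∀ i : ℕ, (1 : ℝ) ≤ cfQ θ (2 * i + 1) := fun i => by
    exact_mod_cast (succ_le_cfQ h (2 * i + 1)).1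
  have hQ' : ∀ i : ℕ, (1 : ℝ) ≤ cfQ θ (2 * i) := fun i => by
    exact_mod_cast (succ_le_cfQ h (2 * i)).1
  have hQQ : ∀ i : ℕ, (cfQ θ (2 * i) : ℝ) ≤ cfQ θ (2 * i + 1) := fun i => by
    exact_mod_cast cfQ_le_succ h (2 * i)
  have hQlin : ∀ i : ℕ, (i : ℝ) + 1 ≤ cfQ θ (2 * i + 1) := fun i => by
    have h1 : ((2 * i : ℕ) : ℝ) + 1 ≤ cfQ θ (2 * i + 1) := by
      exact_mod_cast (succ_le_cfQ h (2 * i)).2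
    push_cast at h1
    have : (0 : ℝ) ≤ i := by positivity
    linarith
  have hr : Tendsto (fun i : ℕ => 1 / (cfQ θ (2 * i + 1) : ℝ) ^ 2) atTop (nhdsWithin 0 (Ioi 0)) := by
    rw [tendsto_nhdsWithin_iff]
    refine ⟨?_, Eventually.of_forall fun i => ?_⟩
    · refine squeeze_zero (fun i => by positivity) (fun i => ?_)
        tendsto_one_div_add_atTop_nhds_zero_nat
      apply one_div_le_one_div_of_le (by positivity)
      nlinarith [hQlin i, hQ i]
    · have := hQ i
      simp only [mem_Ioi]; positivity
  have hmem : ∀ i : ℕ, θ ∈ Metric.closedBall (cfConv θ (2 * i + 1))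
      (1 * (1 / (cfQ θ (2 * i + 1) : ℝ) ^ 2)) := fun i => by
    rw [Metric.mem_closedBall, Real.dist_eq, one_mul]
    have := abs_sub_conv_lt h one_pos i (one_lt_cfAlpha h (2 * i + 1))
    rw [one_mul] at this
    exact this.le
  have ht := hlim (l := atTop) (fun i : ℕ => cfConv θ (2 * i + 1)) _ hr (Eventually.of_forall hmem)
  have hbound : ∀ i ≥ N, volume (avoidSet M N ∩ Metric.closedBall (cfConv θ (2 * i + 1))
        (1 / (cfQ θ (2 * i + 1) : ℝ) ^ 2)) / volume (Metric.closedBall (cfConv θ (2 * i + 1))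
        (1 / (cfQ θ (2 * i + 1) : ℝ) ^ 2)) ≤ ENNReal.ofReal (1 - 1 / (2 * (M + 1))) := by
    intro i hi
    have hdisj := disjoint_avoidSet h hM hi
    have q1 := hQ i
    have q2 := hQ' i
    have q3 := hQQ i
    set w := cfConv θ (2 * i + 1)
    set Q : ℝ := (cfQ θ (2 * i + 1) : ℝ)
    set Q' : ℝ := (cfQ θ (2 * i) : ℝ)
    set ℓ : ℝ := 1 / (Q * (Q * M + Q')) with hℓ
    have hQ0 : 0 < Q := by linarith
    have hℓr : ℓ ≤ 1 / Q ^ 2 := by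
      apply one_div_le_one_div_of_le (by positivity)
      nlinarith
    have hℓl : 1 / (Q ^ 2 * (M + 1)) ≤ ℓ := by
      apply one_div_le_one_div_of_le (by positivity)
      nlinarith
    have hsub : Ioo (w - ℓ) w ⊆ Metric.closedBall w (1 / Q ^ 2) := by
      rw [Real.closedBall_eq_Icc]
      intro y hy
      have : 0 < 1 / Q ^ 2 := by positivity
      exact ⟨by linarith [hy.1], by linarith [hy.2]⟩
    have hle : volume (avoidSet M N ∩ Metric.closedBall w (1 / Q ^ 2))
        ≤ ENNReal.ofReal (2 * (1 / Q ^ 2) - ℓ) := by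
      calc _ ≤ volume (Metric.closedBall w (1 / Q ^ 2) \ Ioo (w - ℓ) w) :=
            measure_mono fun y hy => ⟨hy.2, Set.disjoint_left.mp hdisj hy.1⟩
        _ = _ := by
            rw [measure_sdiff hsub measurableSet_Ioo.nullMeasurableSet (by simp),
              Real.volume_closedBall, Real.volume_Ioo, sub_sub_cancel,
              ENNReal.ofReal_sub _ (by positivity)]
    rw [Real.volume_closedBall]
    refine (ENNReal.div_le_div_right hle _).trans ?_
    rw [← ENNReal.ofReal_div_of_pos (by positivity)]
    apply ENNReal.ofReal_le_ofReal
    rw [div_le_iff₀ (by positivity)]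
    have e : (1 - 1 / (2 * (M + 1))) * (2 * (1 / Q ^ 2))
        = 2 * (1 / Q ^ 2) - 1 / (Q ^ 2 * (M + 1)) := by
      field_simp
    rw [e]
    linarith
  have h1 := le_of_tendsto ht ((eventually_ge_atTop N).mono hbound)
  have h2 : ENNReal.ofReal (1 - 1 / (2 * (M + 1))) < 1 := by
    rw [ENNReal.ofReal_lt_one]
    have : 0 < 1 / (2 * (M + 1)) := by positivity
    linarith
  exact absurd h1 (not_le.mpr h2)

/-- For any real constant `C`, the set `{θ | θ irrational and L₁(θ) > C}` has full
Lebesgue measure in `ℝ`. -/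
theorem odd_lagrange_gt_const_full_measure (C : ℝ) :
    volume ({θ : ℝ | Irrational θ ∧ (C : EReal) < L1 θ})ᶜ = 0 := by
  have hM : 1 ≤ |C| + 1 := by linarith [abs_nonneg C]
  have hnull : volume (range ((↑) : ℚ → ℝ) ∪ ⋃ N, avoidSet (|C| + 1) N) = 0 :=
    measure_union_null ((countable_range _).measure_zero _)
      (measure_iUnion_null fun N => volume_avoidSet hM N)
  refine measure_mono_null (fun θ hθ => ?_) hnull
  by_contra hcon
  simp only [mem_union, mem_iUnion, not_or, not_exists] at hcon
  obtain ⟨hirr, hfreq⟩ := hcon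
  have h : Irrational θ := hirr
  refine hθ ⟨h, ?_⟩
  have hS : |C| + 1 ∈ S1 θ := by
    refine ⟨by linarith, ?_⟩
    rw [Set.infinite_iff_exists_gt]
    intro N
    have hN := hfreq (N + 1)
    simp only [avoidSet, mem_ofPred_eq, not_and, not_forall, not_le] at hN
    obtain ⟨i, hi, hlt⟩ := hN h
    exact ⟨i, abs_sub_conv_lt h (by linarith) i hlt, by omega⟩
  have hlt : (C : EReal) < ((|C| + 1 : ℝ) : EReal) := by
    exact_mod_cast (lt_of_le_of_lt (le_abs_self C) (lt_add_one _))
  exact hlt.trans_le (le_sSup ⟨_, hS, rfl⟩)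
end
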